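/- Fix integers d ≥ 3 and r ≥ 1 and real numbers p with 1/2 < p ≤ 1 and q with 1/d < q ≤ 1. Let (B_1, D_1), …, (B_r, D_r) be i.i.d. pairs in which B_i and D_i are independent, B_i is Bernoulli with P(B_i = 1) = p, and D_i takes values in {0, 1, …, d-1} with P(D_i = 0) = q and P(D_i = j) = (1-q)/(d-1) for every j ≠ 0. For each category c ∈ {0, …, d-1} let N_c = #{ i : B_i = 1 and D_i = c }. Then P( N_0 > N_c for every c ≠ 0 ) ≥ 1 - exp( - r·p·(d-1)·(q - 1/d)^2 / (3d) ). -/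

import Mathlib

open MeasureTheory

/-!
Give the parent weight `x` and each of the other `d - 1` directions weight `z ≤ x`, and let
`F_n(x)` be the total weight of the words of `n` answers in which the parent is not a strict
plurality. Deleting one occurrence of the parent turns a strict plurality into a weak one, so
`F_n' = n B_{n-1}`, where `B` is the weight of the words in which the parent is not even a weak
plurality.

`B` does not depend on which direction is the parent. Averaging over this choice, and comparing
the resulting sum with its values at a fixed position, bounds `Z B` and, after Cauchy-Schwarz,
`P B ^ 2` in terms of the moments `Z = x + (d - 1) z` and `P = 2 x z + (d - 2) z ^ 2`. The product
of the two bounds and AM-GM give `B_{n-1} ≤ T ^ (n-1) T'` for `T = (d P Z) ^ (1/3)`. At `x = z` one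
has `T = Z`, hence `F_n ≤ T ^ n`, and integrating keeps this true for all `x ≥ z`.

For probability weights `Z = 1` and `d P = 1 - (x - z) ^ 2`, so `F_n ≤ (1 - (x - z) ^ 2 / 3) ^ n`
by Bernoulli's inequality. Averaging over the set of answered rounds replaces `(x - z) ^ 2` by
`p (x - z) ^ 2` and `n` by the number of rounds.
-/

section

open Finset

section Moments

variable {ι α R : Type*} [Fintype ι] [DecidableEq ι] [Fintype α]

lemma sum_mul_sum_apply_mul_prod [CommSemiring R] (i : ι) (φ h : α → R) :
    (∑ a, h a) * ∑ ω : ι → α, φ (ω i) * ∏ k, h (ω k) =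
      (∑ a, φ a * h a) * (∑ a, h a) ^ Fintype.card ι := by
  have hsum : ∑ ω : ι → α, φ (ω i) * ∏ k, h (ω k) =
      ∏ k, ∑ a, (if k = i then φ a else 1) * h a := by
    refine Eq.trans (sum_congr rfl fun ω _ => ?_) (sum_prod_piFinset univ _)
    rw [prod_mul_distrib, prod_ite_eq' univ i fun k => φ (ω k), if_pos (mem_univ i)]
  have hcompl : ∏ k ∈ {i}ᶜ, ∑ a, (if k = i then φ a else 1) * h a = ∏ k ∈ {i}ᶜ, ∑ a, h a :=
    prod_congr rfl fun k hk => by simp [notMem_singleton.1 (mem_compl.1 hk)]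
  rw [hsum, ← card_univ, ← prod_const, Fintype.prod_eq_mul_prod_compl i, hcompl,
    Fintype.prod_eq_mul_prod_compl i]
  simp only [if_true]
  ring

lemma sum_mul_sum_filter_apply_ne [DecidableEq α] [CommRing R] (i : ι) (c : α) (h : α → R) :
    (∑ a, h a) * ∑ ω : ι → α with ω i ≠ c, ∏ k, h (ω k) =
      ((∑ a, h a) - h c) * (∑ a, h a) ^ Fintype.card ι := by
  have hne : ∑ a, (if a ≠ c then 1 else 0) * h a = (∑ a, h a) - h c := by
    simp only [ite_mul, one_mul, zero_mul, ← sum_filter, filter_ne', sum_erase_eq_sub (mem_univ c)]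
  rw [← hne, ← sum_mul_sum_apply_mul_prod i]
  simp only [sum_filter, ite_mul, one_mul, zero_mul]

lemma sum_sum_erase_apply [DecidableEq α] [AddCommMonoid R] (i : ι) (f : α → (ι → α) → R) :
    ∑ ω : ι → α, ∑ k ∈ univ.erase (ω i), f k ω = ∑ k, ∑ ω : ι → α with ω i ≠ k, f k ω :=
  sum_comm' fun ω k => by simp [ne_comm]

end Moments

lemma measure_pi_setOf_eq_ofReal_sum {ι β : Type*} [Fintype ι] [DecidableEq ι] [Fintype β]
    [MeasurableSpace β] [MeasurableSingletonClass β] {ν : Measure β} [SigmaFinite ν] {w : β → ℝ}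
    (hw : ∀ b, 0 ≤ w b) (hν : ∀ b, ν {b} = ENNReal.ofReal (w b))
    (E : (ι → β) → Prop) [DecidablePred E] :
    (Measure.pi fun _ : ι => ν) {ω | E ω} = ENNReal.ofReal (∑ ω with E ω, ∏ i, w (ω i)) := by
  rw [ENNReal.ofReal_sum_of_nonneg fun ω _ => prod_nonneg fun i _ => hw (ω i),
    ← coe_filter_univ, ← sum_measure_singleton]
  refine sum_congr rfl fun ω _ => ?_
  rw [Measure.pi_singleton, ENNReal.ofReal_prod_of_nonneg fun i _ => hw (ω i)]
  exact prod_congr rfl fun i _ => hν (ω i)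

section Totals

variable (α : Type*) [Fintype α] {x z : ℝ}

/-- The total weight of the alphabet when one letter weighs `x` and the others weigh `z`. It is
the normalisation of the letter weights, equal to `1` for probability weights. -/
def letterTotal (x z : ℝ) : ℝ := x + (Fintype.card α - 1) * z

/-- The total weight of the alphabet when each letter gets the product of its two weights for two
distinct heavy letters. It is the overlap in the second moment of the word weights. -/
def pairTotal (x z : ℝ) : ℝ := 2 * x * z + (Fintype.card α - 2) * z ^ 2

/-- The growth rate `(d P Z) ^ (1 / 3)` per letter, where `d` is the number of letters, `P` is
`pairTotal` and `Z` is `letterTotal`. Its powers dominate the weight of failed pluralities. -/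
noncomputable def pluralityRate (x z : ℝ) : ℝ :=
  (Fintype.card α * pairTotal α x z * letterTotal α x z) ^ (1 / 3 : ℝ)

variable [Nonempty α]

lemma letterTotal_pos (hz : 0 < z) (hzx : z ≤ x) : 0 < letterTotal α x z := by
  have hd : (1 : ℝ) ≤ Fintype.card α := mod_cast Fintype.card_pos
  exact add_pos_of_pos_of_nonneg (hz.trans_le hzx) (mul_nonneg (sub_nonneg.2 hd) hz.le)

lemma pairTotal_pos (hz : 0 < z) (hzx : z ≤ x) : 0 < pairTotal α x z := by
  have hd : (0 : ℝ) < Fintype.card α := mod_cast Fintype.card_pos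
  calc 0 < 2 * (x - z) * z + Fintype.card α * z ^ 2 :=
        add_pos_of_nonneg_of_pos (by bound) (by positivity)
    _ = pairTotal α x z := by rw [pairTotal]; ring

lemma pluralityRate_pow_three (hz : 0 < z) (hzx : z ≤ x) :
    pluralityRate α x z ^ 3 = Fintype.card α * pairTotal α x z * letterTotal α x z := by
  have hP := pairTotal_pos α hz hzx
  have hZ := letterTotal_pos α hz hzx
  rw [pluralityRate, ← Real.rpow_mul_natCast (by positivity)]
  norm_num

lemma pluralityRate_pos (hz : 0 < z) (hzx : z ≤ x) : 0 < pluralityRate α x z := by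
  have hP := pairTotal_pos α hz hzx
  have hZ := letterTotal_pos α hz hzx
  exact Real.rpow_pos_of_pos (by positivity) _

lemma pluralityRate_self (hz : 0 < z) : pluralityRate α z z = letterTotal α z z := by
  have hZ := letterTotal_pos α hz le_rfl
  refine (pow_left_inj₀ (pluralityRate_pos α hz le_rfl).le hZ.le three_ne_zero).1 ?_
  rw [pluralityRate_pow_three α hz le_rfl, pairTotal, letterTotal]
  ring

lemma hasDerivAt_pluralityRate (hz : 0 < z) (hzx : z ≤ x) :
    HasDerivAt (fun x => pluralityRate α x z)
      (Fintype.card α * (2 * (z * letterTotal α x z) + pairTotal α x z) /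
        (3 * pluralityRate α x z ^ 2)) x := by
  have hZ : HasDerivAt (fun x => letterTotal α x z) 1 x := (hasDerivAt_id x).add_const _
  have hP : HasDerivAt (fun x => pairTotal α x z) (2 * 1 * z) x :=
    (((hasDerivAt_id x).const_mul 2).mul_const z).add_const _
  have hprod := (hP.const_mul (Fintype.card α : ℝ)).fun_mul hZ
  have hcube := pluralityRate_pow_three α hz hzx
  have hrate := pluralityRate_pos α hz hzx
  have hne : Fintype.card α * pairTotal α x z * letterTotal α x z ≠ 0 :=
    hcube ▸ (pow_pos hrate 3).ne'
  refine (hprod.rpow_const (p := 1 / 3) (Or.inl hne)).congr_deriv ?_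
  rw [Real.rpow_sub_one hne, ← pluralityRate, ← hcube]
  field_simp

end Totals

variable {ι α : Type*} [Fintype ι] [DecidableEq α]

/-- The number of votes for `c` in the word of votes `ω`. -/
def letterCount (ω : ι → α) (c : α) : ℕ := #{i | ω i = c}

/-- Weak plurality: no letter gets more votes than `j`, ties being allowed. -/
def IsPlurality (ω : ι → α) (j : α) : Prop := ∀ c, letterCount ω c ≤ letterCount ω j

/-- Strict plurality: every letter other than `j` gets fewer votes than `j`. -/
def IsStrictPlurality (ω : ι → α) (j : α) : Prop :=
  ∀ c, c ≠ j → letterCount ω c < letterCount ω j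

/-- The unnormalised law of a single vote whose heavy letter is `j`. -/
def letterWeight (x z : ℝ) (j a : α) : ℝ := if a = j then x else z

/-- The unnormalised law of a word of independent votes with heavy letter `j`. -/
def wordWeight (x z : ℝ) (j : α) (ω : ι → α) : ℝ := ∏ i, letterWeight x z j (ω i)

lemma letterCount_restrict (P : ι → Prop) [DecidablePred P] (ω : ι → α) (c : α) :
    letterCount (Subtype.restrict P ω) c = #{i | P i ∧ ω i = c} := by
  rw [← filter_filter, letterCount, card_filter, card_filter]
  exact (sum_subtype _ (fun i => mem_filter_univ i) fun i => if ω i = c then 1 else 0).symm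

lemma letterCount_eq_add_restrict [DecidableEq ι] (ω : ι → α) (i : ι) (c : α) :
    letterCount ω c =
      (if ω i = c then 1 else 0) + letterCount (Subtype.restrict (· ≠ i) ω) c := by
  simp only [letterCount, card_filter]
  exact Fintype.sum_eq_add_sum_subtype_ne (fun k => if ω k = c then 1 else 0) i

lemma isStrictPlurality_iff_restrict [DecidableEq ι] {ω : ι → α} {i : ι} {j : α} (hi : ω i = j) :
    IsStrictPlurality ω j ↔ IsPlurality (Subtype.restrict (· ≠ i) ω) j := by
  refine forall_congr' fun c => ?_
  rw [letterCount_eq_add_restrict ω i c, letterCount_eq_add_restrict ω i j, hi]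
  rcases eq_or_ne c j with rfl | hc
  · simp
  · simp [hc, hc.symm, Nat.lt_one_add_iff]

section Weights

variable {x z : ℝ}

lemma letterWeight_self (j : α) : letterWeight x z j j = x := if_pos rfl

lemma letterWeight_of_ne {j a : α} (h : a ≠ j) : letterWeight x z j a = z := if_neg h

lemma letterWeight_nonneg (hx : 0 ≤ x) (hz : 0 ≤ z) (j a : α) : 0 ≤ letterWeight x z j a := by
  unfold letterWeight
  split_ifs <;> assumption

lemma wordWeight_nonneg (hx : 0 ≤ x) (hz : 0 ≤ z) (j : α) (ω : ι → α) : 0 ≤ wordWeight x z j ω :=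
  prod_nonneg fun i _ => letterWeight_nonneg hx hz j (ω i)

lemma letterCount_le_card (ω : ι → α) (c : α) : letterCount ω c ≤ Fintype.card ι :=
  card_le_univ _

lemma wordWeight_eq_pow_mul_pow (j : α) (ω : ι → α) :
    wordWeight x z j ω = x ^ letterCount ω j * z ^ (Fintype.card ι - letterCount ω j) := by
  have hcard : #{i | ¬ ω i = j} = Fintype.card ι - letterCount ω j :=
    Nat.eq_sub_of_add_eq' (card_filter_add_card_filter_not (fun i => ω i = j))
  simp only [wordWeight, letterWeight, prod_ite, prod_const, hcard]
  rfl

lemma wordWeight_le_wordWeight (hz : 0 ≤ z) (hzx : z ≤ x) {i j : α} {ω : ι → α}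
    (h : letterCount ω i ≤ letterCount ω j) : wordWeight x z i ω ≤ wordWeight x z j ω := by
  have hx := hz.trans hzx
  obtain ⟨m, hm⟩ := Nat.exists_eq_add_of_le h
  obtain ⟨l, hl⟩ := Nat.exists_eq_add_of_le (letterCount_le_card ω j)
  rw [wordWeight_eq_pow_mul_pow, wordWeight_eq_pow_mul_pow, hl, Nat.add_sub_cancel_left, hm,
    add_assoc, Nat.add_sub_cancel_left, pow_add, pow_add, ← mul_assoc]
  gcongr

lemma letterWeight_apply_apply (σ : Equiv.Perm α) (j a : α) :
    letterWeight x z (σ j) (σ a) = letterWeight x z j a := by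
  simp only [letterWeight, σ.injective.eq_iff]

lemma letterCount_comp (σ : Equiv.Perm α) (ω : ι → α) (c : α) :
    letterCount (σ ∘ ω) (σ c) = letterCount ω c := by
  simp only [letterCount, Function.comp_apply, σ.injective.eq_iff]

lemma isPlurality_comp (σ : Equiv.Perm α) (ω : ι → α) (j : α) :
    IsPlurality (σ ∘ ω) (σ j) ↔ IsPlurality ω j := by
  simp only [IsPlurality, ← σ.forall_congr_right (q := fun c => letterCount _ c ≤ _),
    letterCount_comp]

lemma hasDerivAt_wordWeight [DecidableEq ι] (j : α) (ω : ι → α) :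
    HasDerivAt (fun x => wordWeight x z j ω)
      (∑ i, if ω i = j then wordWeight x z j (Subtype.restrict (· ≠ i) ω) else 0) x := by
  have hletter : ∀ i ∈ (univ : Finset ι), HasDerivAt (fun x => letterWeight x z j (ω i))
      (if ω i = j then 1 else 0) x := by
    intro i _
    unfold letterWeight
    split_ifs
    exacts [hasDerivAt_id x, hasDerivAt_const x z]
  refine (HasDerivAt.fun_finsetProd hletter).congr_deriv (sum_congr rfl fun i _ => ?_)
  rw [smul_eq_mul, mul_ite, mul_one, mul_zero, prod_subtype (univ.erase i) (p := (· ≠ i)) (by simp)]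
  rfl

variable [Fintype α]

instance (ω : ι → α) (j : α) : Decidable (IsPlurality ω j) := Fintype.decidableForallFintype

instance (ω : ι → α) (j : α) : Decidable (IsStrictPlurality ω j) :=
  Fintype.decidableForallFintype

variable (ι) in
/-- The total weight of the words in which the heavy letter `j` is beaten by some other letter. -/
def nonPluralityWeight [DecidableEq ι] (x z : ℝ) (j : α) : ℝ :=
  ∑ ω : ι → α with ¬ IsPlurality ω j, wordWeight x z j ω

variable (ι) in
/-- The total weight of the words in which the heavy letter `j` is beaten or tied; for probability
weights it is the failure probability of plurality voting. -/
def nonStrictPluralityWeight [DecidableEq ι] (x z : ℝ) (j : α) : ℝ :=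
  ∑ ω : ι → α with ¬ IsStrictPlurality ω j, wordWeight x z j ω

variable [DecidableEq ι]

lemma hasDerivAt_nonStrictPluralityWeight (j : α) :
    HasDerivAt (fun x => nonStrictPluralityWeight ι x z j)
      (∑ i : ι, nonPluralityWeight {k // k ≠ i} x z j) x := by
  refine (HasDerivAt.fun_sum fun ω _ => hasDerivAt_wordWeight j ω).congr_deriv ?_
  rw [sum_comm]
  refine sum_congr rfl fun i _ => ?_
  calc ∑ ω : ι → α with ¬ IsStrictPlurality ω j,
        (if ω i = j then wordWeight x z j (Subtype.restrict (· ≠ i) ω) else 0)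
      = ∑ ω : ι → α, if ω i = j then
          (if ¬ IsPlurality (Subtype.restrict (· ≠ i) ω) j then
            wordWeight x z j (Subtype.restrict (· ≠ i) ω) else 0) else 0 := by
        rw [sum_filter]
        refine sum_congr rfl fun ω _ => ?_
        by_cases hi : ω i = j
        · simp only [isStrictPlurality_iff_restrict hi]
          simp only [hi, if_true]
        · simp only [hi, if_false, ite_self]
    _ = ∑ a, ∑ ω : {k // k ≠ i} → α, if a = j then
          (if ¬ IsPlurality ω j then wordWeight x z j ω else 0) else 0 := by
        rw [← Fintype.sum_prod_type', ← (Equiv.funSplitAt i α).sum_comp]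
        rfl
    _ = nonPluralityWeight {k // k ≠ i} x z j := by
        simp only [← ite_sum_zero, sum_ite_eq', mem_univ, if_true, nonPluralityWeight, sum_filter]

lemma nonPluralityWeight_eq_nonPluralityWeight (i j : α) :
    nonPluralityWeight ι x z i = nonPluralityWeight ι x z j := by
  let σ := Equiv.swap i j
  have hword (ω : ι → α) : wordWeight x z j (σ ∘ ω) = wordWeight x z i ω := by
    simp only [wordWeight, Function.comp_apply, ← letterWeight_apply_apply σ i, σ,
      Equiv.swap_apply_left]
  have hplur (ω : ι → α) : IsPlurality (σ ∘ ω) j ↔ IsPlurality ω i := by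
    rw [← isPlurality_comp σ ω i, Equiv.swap_apply_left]
  refine sum_equiv ((Equiv.refl ι).arrowCongr σ) (fun ω => ?_) fun ω _ => (hword ω).symm
  change _ ↔ σ ∘ ω ∈ _
  simp only [mem_filter_univ, hplur]

lemma nonPluralityWeight_nonneg (hx : 0 ≤ x) (hz : 0 ≤ z) (j : α) :
    0 ≤ nonPluralityWeight ι x z j :=
  sum_nonneg fun ω _ => wordWeight_nonneg hx hz j ω

lemma exists_card_mul_nonPluralityWeight_le (hz : 0 ≤ z) (hzx : z ≤ x) (j : α) :
    ∃ m : (ι → α) → α, (∀ ω k, wordWeight x z k ω ≤ wordWeight x z (m ω) ω) ∧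
      Fintype.card α * nonPluralityWeight ι x z j ≤
        ∑ ω, ∑ k ∈ univ.erase (m ω), wordWeight x z k ω := by
  have : Nonempty α := ⟨j⟩
  choose m hm using fun ω : ι → α => Finite.exists_max (letterCount ω)
  refine ⟨m, fun ω k => wordWeight_le_wordWeight hz hzx (hm ω k), ?_⟩
  calc Fintype.card α * nonPluralityWeight ι x z j
      = ∑ k : α, nonPluralityWeight ι x z k := by
        rw [sum_congr rfl fun k _ => nonPluralityWeight_eq_nonPluralityWeight k j, sum_const,
          card_univ, nsmul_eq_mul]
    _ = ∑ ω : ι → α, ∑ k with ¬ IsPlurality ω k, wordWeight x z k ω := by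
        simp only [nonPluralityWeight, sum_filter]
        exact sum_comm
    _ ≤ ∑ ω, ∑ k ∈ univ.erase (m ω), wordWeight x z k ω := by
        refine sum_le_sum fun ω _ => sum_le_sum_of_subset_of_nonneg (fun k hk => ?_)
          fun k _ _ => wordWeight_nonneg (hz.trans hzx) hz k ω
        refine mem_erase.2 ⟨?_, mem_univ k⟩
        rintro rfl
        exact (mem_filter.1 hk).2 (hm ω)

lemma sum_letterWeight (j : α) : ∑ a, letterWeight x z j a = letterTotal α x z := by
  have hsplit (a : α) : letterWeight x z j a = z + if a = j then x - z else 0 := by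
    unfold letterWeight
    split_ifs <;> ring
  simp only [hsplit, sum_add_distrib, sum_const, card_univ, sum_ite_eq', mem_univ, if_true,
    nsmul_eq_mul, letterTotal]
  ring

lemma sum_letterWeight_mul_letterWeight {i j : α} (hij : i ≠ j) :
    ∑ a, letterWeight x z i a * letterWeight x z j a = pairTotal α x z := by
  have hsplit (a : α) : letterWeight x z i a * letterWeight x z j a =
      z * letterWeight x z j a + if a = i then (x - z) * z else 0 := by
    unfold letterWeight
    split_ifs with hi hj
    · exact absurd (hi.symm.trans hj) hij
    all_goals ring
  simp only [hsplit, sum_add_distrib, ← mul_sum, sum_letterWeight, sum_ite_eq', mem_univ, if_true,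
    letterTotal, pairTotal]
  ring

lemma sum_wordWeight (j : α) :
    ∑ ω : ι → α, wordWeight x z j ω = letterTotal α x z ^ Fintype.card ι := by
  rw [← sum_letterWeight j, ← card_univ, ← prod_const]
  exact sum_prod_piFinset univ fun _ a => letterWeight x z j a

lemma sq_sum_erase_le_sum_mul_sum {v : α → ℝ} (hv : ∀ k, 0 ≤ v k) {m : α} (hm : ∀ k, v k ≤ v m)
    (a : α) :
    (∑ k ∈ univ.erase m, v k) ^ 2 ≤ ∑ k ∈ univ.erase a, ∑ l ∈ univ.erase k, v k * v l := by
  have herase (k : α) : ∑ l ∈ univ.erase m, v l ≤ ∑ l ∈ univ.erase k, v l := by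
    rw [sum_erase_eq_sub (mem_univ m), sum_erase_eq_sub (mem_univ k)]
    exact sub_le_sub_left (hm k) _
  calc (∑ k ∈ univ.erase m, v k) ^ 2
      ≤ (∑ k ∈ univ.erase a, v k) * ∑ l ∈ univ.erase m, v l := by
        rw [sq]
        exact mul_le_mul_of_nonneg_right (herase a) (sum_nonneg fun k _ => hv k)
    _ ≤ ∑ k ∈ univ.erase a, v k * ∑ l ∈ univ.erase k, v l := by
        rw [sum_mul]
        exact sum_le_sum fun k _ => mul_le_mul_of_nonneg_left (herase k) (hv k)
    _ = ∑ k ∈ univ.erase a, ∑ l ∈ univ.erase k, v k * v l := by simp only [mul_sum]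

lemma letterTotal_mul_sum_wordWeight (i : ι) (k : α) :
    letterTotal α x z * ∑ ω : ι → α with ω i ≠ k, wordWeight x z k ω =
      (letterTotal α x z - x) * letterTotal α x z ^ Fintype.card ι := by
  have h := sum_mul_sum_filter_apply_ne i k (letterWeight x z k)
  rwa [sum_letterWeight, letterWeight_self] at h

lemma pairTotal_mul_sum_wordWeight_mul_wordWeight (i : ι) {k l : α} (hkl : k ≠ l) :
    pairTotal α x z * ∑ ω : ι → α with ω i ≠ k, wordWeight x z k ω * wordWeight x z l ω =
      (pairTotal α x z - x * z) * pairTotal α x z ^ Fintype.card ι := by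
  have h := sum_mul_sum_filter_apply_ne i k fun a => letterWeight x z k a * letterWeight x z l a
  simp only [sum_letterWeight_mul_letterWeight hkl, letterWeight_self, letterWeight_of_ne hkl,
    prod_mul_distrib] at h
  exact h

lemma pairTotal_mul_sum_erase_wordWeight_mul_wordWeight (i : ι) :
    pairTotal α x z * ∑ ω : ι → α, ∑ k ∈ univ.erase (ω i), ∑ l ∈ univ.erase k,
        wordWeight x z k ω * wordWeight x z l ω =
      Fintype.card α * ((Fintype.card α - 1 : ℕ) *
        ((pairTotal α x z - x * z) * pairTotal α x z ^ Fintype.card ι)) := by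
  have hk (k : α) : pairTotal α x z * ∑ ω : ι → α with ω i ≠ k, ∑ l ∈ univ.erase k,
      wordWeight x z k ω * wordWeight x z l ω = (Fintype.card α - 1 : ℕ) *
        ((pairTotal α x z - x * z) * pairTotal α x z ^ Fintype.card ι) := by
    rw [sum_comm, mul_sum, sum_congr rfl fun l hl =>
      pairTotal_mul_sum_wordWeight_mul_wordWeight i (ne_of_mem_erase hl).symm, sum_const,
      card_erase_of_mem (mem_univ k), card_univ, nsmul_eq_mul]
  rw [sum_sum_erase_apply, mul_sum, sum_congr rfl fun k _ => hk k, sum_const, card_univ,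
    nsmul_eq_mul]

lemma nonPluralityWeight_of_isEmpty [IsEmpty ι] (j : α) : nonPluralityWeight ι x z j = 0 :=
  sum_eq_zero fun ω hω => ((mem_filter.1 hω).2 fun c => by simp [letterCount]).elim

lemma letterTotal_mul_nonPluralityWeight_le (hz : 0 < z) (hzx : z ≤ x) (j : α) :
    letterTotal α x z * nonPluralityWeight ι x z j ≤
      Fintype.card α * z * letterTotal α x z ^ Fintype.card ι := by
  have : Nonempty α := ⟨j⟩
  have hd : (0 : ℝ) < Fintype.card α := mod_cast Fintype.card_pos
  have hZ := letterTotal_pos α hz hzx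
  rcases isEmpty_or_nonempty ι with _ | ⟨⟨i⟩⟩
  · rw [nonPluralityWeight_of_isEmpty, mul_zero]
    positivity
  obtain ⟨m, hm, hle⟩ := exists_card_mul_nonPluralityWeight_le (ι := ι) hz.le hzx j
  have hcoeff : letterTotal α x z - x ≤ Fintype.card α * z := by
    rw [letterTotal]
    linarith
  refine le_of_mul_le_mul_left ?_ hd
  calc Fintype.card α * (letterTotal α x z * nonPluralityWeight ι x z j)
      = letterTotal α x z * (Fintype.card α * nonPluralityWeight ι x z j) := by ring
    _ ≤ letterTotal α x z * ∑ ω, ∑ k ∈ univ.erase (ω i), wordWeight x z k ω := by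
        refine mul_le_mul_of_nonneg_left (hle.trans (sum_le_sum fun ω _ => ?_)) hZ.le
        rw [sum_erase_eq_sub (mem_univ _), sum_erase_eq_sub (mem_univ _)]
        exact sub_le_sub_left (hm ω (ω i)) _
    _ = Fintype.card α * ((letterTotal α x z - x) * letterTotal α x z ^ Fintype.card ι) := by
        rw [sum_sum_erase_apply, mul_sum,
          sum_congr rfl fun k _ => letterTotal_mul_sum_wordWeight i k, sum_const, card_univ,
          nsmul_eq_mul]
    _ ≤ Fintype.card α * (Fintype.card α * z * letterTotal α x z ^ Fintype.card ι) := by gcongr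

lemma sq_card_mul_nonPluralityWeight_le (hz : 0 ≤ z) (hzx : z ≤ x) (i : ι) (j : α) :
    (Fintype.card α * nonPluralityWeight ι x z j) ^ 2 ≤ Fintype.card α ^ Fintype.card ι *
      ∑ ω : ι → α, ∑ k ∈ univ.erase (ω i), ∑ l ∈ univ.erase k,
        wordWeight x z k ω * wordWeight x z l ω := by
  have hx := hz.trans hzx
  obtain ⟨m, hm, hle⟩ := exists_card_mul_nonPluralityWeight_le (ι := ι) hz hzx j
  calc (Fintype.card α * nonPluralityWeight ι x z j) ^ 2
      ≤ (∑ ω, ∑ k ∈ univ.erase (m ω), wordWeight x z k ω) ^ 2 :=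
        pow_le_pow_left₀ (mul_nonneg (Nat.cast_nonneg _) (nonPluralityWeight_nonneg hx hz j)) hle 2
    _ ≤ Fintype.card α ^ Fintype.card ι *
        ∑ ω, (∑ k ∈ univ.erase (m ω), wordWeight x z k ω) ^ 2 := by
        simpa using sq_sum_le_card_mul_sum_sq (s := univ)
          (f := fun ω => ∑ k ∈ univ.erase (m ω), wordWeight x z k ω)
    _ ≤ _ := by
        gcongr with ω
        exact sq_sum_erase_le_sum_mul_sum (fun k => wordWeight_nonneg hx hz k ω) (hm ω) (ω i)

lemma pairTotal_mul_nonPluralityWeight_sq_le (hz : 0 < z) (hzx : z ≤ x) (j : α) :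
    pairTotal α x z * nonPluralityWeight ι x z j ^ 2 ≤
      z * letterTotal α x z * (Fintype.card α * pairTotal α x z) ^ Fintype.card ι := by
  have : Nonempty α := ⟨j⟩
  have hZ := letterTotal_pos α hz hzx
  have hP := pairTotal_pos α hz hzx
  rcases isEmpty_or_nonempty ι with _ | ⟨⟨i⟩⟩
  · rw [nonPluralityWeight_of_isEmpty, zero_pow two_ne_zero, mul_zero]
    positivity
  have hcoeff : ((Fintype.card α - 1 : ℕ) : ℝ) * (pairTotal α x z - x * z) ≤
      Fintype.card α * (z * letterTotal α x z) := by
    have hd : 1 ≤ Fintype.card α := Fintype.card_pos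
    have hxz := mul_pos (hz.trans_le hzx) hz
    have hd' := mul_nonneg (sub_nonneg.2 (Nat.one_le_cast (α := ℝ).2 hd)) (sq_nonneg z)
    push_cast [hd, pairTotal, letterTotal]
    linarith
  refine le_of_mul_le_mul_left ?_ (by positivity : (0 : ℝ) < Fintype.card α ^ 2)
  calc (Fintype.card α : ℝ) ^ 2 * (pairTotal α x z * nonPluralityWeight ι x z j ^ 2)
      = pairTotal α x z * (Fintype.card α * nonPluralityWeight ι x z j) ^ 2 := by ring
    _ ≤ pairTotal α x z * (Fintype.card α ^ Fintype.card ι *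
        ∑ ω : ι → α, ∑ k ∈ univ.erase (ω i), ∑ l ∈ univ.erase k,
          wordWeight x z k ω * wordWeight x z l ω) :=
        mul_le_mul_of_nonneg_left (sq_card_mul_nonPluralityWeight_le hz.le hzx i j) hP.le
    _ = Fintype.card α * (Fintype.card α * pairTotal α x z) ^ Fintype.card ι *
        ((Fintype.card α - 1 : ℕ) * (pairTotal α x z - x * z)) := by
        rw [mul_left_comm, pairTotal_mul_sum_erase_wordWeight_mul_wordWeight, mul_pow]
        ring
    _ ≤ Fintype.card α * (Fintype.card α * pairTotal α x z) ^ Fintype.card ι *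
        (Fintype.card α * (z * letterTotal α x z)) := by gcongr
    _ = _ := by ring

lemma pairTotal_mul_nonPluralityWeight_cube_le (hz : 0 < z) (hzx : z ≤ x) (j : α) :
    pairTotal α x z * nonPluralityWeight ι x z j ^ 3 ≤
      Fintype.card α * z ^ 2 * (pluralityRate α x z ^ Fintype.card ι) ^ 3 := by
  have : Nonempty α := ⟨j⟩
  have hZ := letterTotal_pos α hz hzx
  refine le_of_mul_le_mul_left ?_ hZ
  calc letterTotal α x z * (pairTotal α x z * nonPluralityWeight ι x z j ^ 3)
      = letterTotal α x z * nonPluralityWeight ι x z j *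
          (pairTotal α x z * nonPluralityWeight ι x z j ^ 2) := by ring
    _ ≤ Fintype.card α * z * letterTotal α x z ^ Fintype.card ι *
          (z * letterTotal α x z * (Fintype.card α * pairTotal α x z) ^ Fintype.card ι) :=
        mul_le_mul (letterTotal_mul_nonPluralityWeight_le hz hzx j)
          (pairTotal_mul_nonPluralityWeight_sq_le hz hzx j)
          (mul_nonneg (pairTotal_pos α hz hzx).le (sq_nonneg _)) (by positivity)
    _ = _ := by
        rw [pow_right_comm, pluralityRate_pow_three α hz hzx, mul_pow _ (letterTotal α x z)]
        ring

lemma twenty_seven_mul_sq_mul_le_cube {a b : ℝ} (ha : 0 ≤ a) (hb : 0 ≤ b) :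
    27 * (a ^ 2 * b) ≤ (2 * a + b) ^ 3 := by
  have h : 0 ≤ (a - b) ^ 2 * (8 * a + b) := by positivity
  linarith

lemma nonPluralityWeight_le_pluralityRate_pow_mul (hz : 0 < z) (hzx : z ≤ x) (j : α) :
    nonPluralityWeight ι x z j ≤ pluralityRate α x z ^ Fintype.card ι *
      (Fintype.card α * (2 * (z * letterTotal α x z) + pairTotal α x z) /
        (3 * pluralityRate α x z ^ 2)) := by
  have : Nonempty α := ⟨j⟩
  have hZ := letterTotal_pos α hz hzx
  have hP := pairTotal_pos α hz hzx
  have hrate := pluralityRate_pos α hz hzx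
  have hcube := pluralityRate_pow_three α hz hzx
  have hamgm := twenty_seven_mul_sq_mul_le_cube (mul_pos hz hZ).le hP.le
  refine le_of_pow_le_pow_left₀ three_ne_zero (by positivity) (le_of_mul_le_mul_left ?_ hP)
  have hsix : (pluralityRate α x z ^ 2) ^ 3 =
      (Fintype.card α * pairTotal α x z * letterTotal α x z) ^ 2 := by
    rw [← hcube, pow_right_comm]
  calc pairTotal α x z * nonPluralityWeight ι x z j ^ 3
      ≤ Fintype.card α * z ^ 2 * (pluralityRate α x z ^ Fintype.card ι) ^ 3 :=
        pairTotal_mul_nonPluralityWeight_cube_le hz hzx j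
    _ = Fintype.card α * (pluralityRate α x z ^ Fintype.card ι) ^ 3 *
        (27 * ((z * letterTotal α x z) ^ 2 * pairTotal α x z)) /
          (27 * pairTotal α x z * letterTotal α x z ^ 2) := by field_simp
    _ ≤ Fintype.card α * (pluralityRate α x z ^ Fintype.card ι) ^ 3 *
        (2 * (z * letterTotal α x z) + pairTotal α x z) ^ 3 /
          (27 * pairTotal α x z * letterTotal α x z ^ 2) := by gcongr
    _ = _ := by
        rw [mul_pow, div_pow, mul_pow 3, hsix]
        field_simp
        norm_num

lemma nonStrictPluralityWeight_le_letterTotal_pow (hx : 0 ≤ x) (hz : 0 ≤ z) (j : α) :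
    nonStrictPluralityWeight ι x z j ≤ letterTotal α x z ^ Fintype.card ι := by
  rw [← sum_wordWeight j]
  exact sum_le_univ_sum_of_nonneg fun ω => wordWeight_nonneg hx hz j ω

lemma nonStrictPluralityWeight_le_pluralityRate_pow (hz : 0 < z) (hzx : z ≤ x) (j : α) :
    nonStrictPluralityWeight ι x z j ≤ pluralityRate α x z ^ Fintype.card ι := by
  have : Nonempty α := ⟨j⟩
  have hderiv {y : ℝ} (hy : z ≤ y) := ((hasDerivAt_pluralityRate α hz hy).fun_pow
    (Fintype.card ι)).fun_sub (hasDerivAt_nonStrictPluralityWeight (ι := ι) (z := z) j)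
  have hmono : MonotoneOn (fun y => pluralityRate α y z ^ Fintype.card ι -
      nonStrictPluralityWeight ι y z j) (Set.Ici z) := by
    refine monotoneOn_of_deriv_nonneg (convex_Ici z)
      (fun y hy => (hderiv hy).continuousAt.continuousWithinAt)
      (fun y hy => (hderiv (interior_subset hy)).differentiableAt.differentiableWithinAt)
      fun y hy => ?_
    have hzy : z ≤ y := interior_subset hy
    rw [(hderiv hzy).deriv, sub_nonneg]
    refine (sum_le_sum fun i _ => nonPluralityWeight_le_pluralityRate_pow_mul hz hzy j).trans_eq ?_
    simp only [Fintype.card_subtype_compl, Fintype.card_unique, sum_const, card_univ, nsmul_eq_mul,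
      mul_assoc]
  have hstart : nonStrictPluralityWeight ι z z j ≤ pluralityRate α z z ^ Fintype.card ι :=
    (pluralityRate_self α hz).symm ▸ nonStrictPluralityWeight_le_letterTotal_pow hz.le hz.le j
  exact sub_nonneg.1 ((sub_nonneg.2 hstart).trans (hmono Set.self_mem_Ici hzx hzx))

lemma nonStrictPluralityWeight_zero [Nonempty ι] (x : ℝ) (j : α) :
    nonStrictPluralityWeight ι x 0 j = 0 := by
  refine sum_eq_zero fun ω hω => ?_
  obtain ⟨i, hi⟩ : ∃ i, ω i ≠ j := by
    by_contra! hconst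
    refine (mem_filter.1 hω).2 fun c hc => ?_
    simp [letterCount, hconst, hc.symm, Fintype.card_pos]
  exact prod_eq_zero (mem_univ i) (letterWeight_of_ne hi)

lemma nonStrictPluralityWeight_le_one_sub_pow (hz : 0 ≤ z) (hzx : z ≤ x)
    (htotal : letterTotal α x z = 1) (j : α) :
    nonStrictPluralityWeight ι x z j ≤ (1 - (x - z) ^ 2 / 3) ^ Fintype.card ι := by
  have : Nonempty α := ⟨j⟩
  rcases hz.eq_or_lt with rfl | hz
  · obtain rfl : x = 1 := by simpa [letterTotal] using htotal
    rcases isEmpty_or_nonempty ι with _ | _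
    · simpa using nonStrictPluralityWeight_le_letterTotal_pow (ι := ι) zero_le_one le_rfl j
    · rw [nonStrictPluralityWeight_zero]
      norm_num
  have hpair : Fintype.card α * pairTotal α x z = 1 - (x - z) ^ 2 := by
    rw [← one_pow 2, ← htotal, pairTotal, letterTotal]
    ring
  have hdelta : 0 < 1 - (x - z) ^ 2 := by
    have := pairTotal_pos α hz hzx
    rw [← hpair]
    positivity
  refine (nonStrictPluralityWeight_le_pluralityRate_pow hz hzx j).trans
    (pow_le_pow_left₀ (pluralityRate_pos α hz hzx).le ?_ _)
  calc pluralityRate α x z = (1 + -(x - z) ^ 2) ^ (1 / 3 : ℝ) := by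
        rw [pluralityRate, hpair, htotal, mul_one, sub_eq_add_neg]
    _ ≤ 1 + 1 / 3 * -(x - z) ^ 2 :=
        rpow_one_add_le_one_add_mul_self (by linarith) (by norm_num) (by norm_num)
    _ = 1 - (x - z) ^ 2 / 3 := by ring

lemma sum_wordWeight_restrict (P : ι → Prop) [DecidablePred P] (j : α) :
    ∑ ω : ι → α with ¬ IsStrictPlurality (Subtype.restrict P ω) j, wordWeight x z j ω =
      letterTotal α x z ^ Fintype.card {i // ¬ P i} *
        nonStrictPluralityWeight {i // P i} x z j := by
  calc ∑ ω : ι → α with ¬ IsStrictPlurality (Subtype.restrict P ω) j, wordWeight x z j ω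
      = ∑ ω : ι → α, (if ¬ IsStrictPlurality (Subtype.restrict P ω) j then
          wordWeight x z j (Subtype.restrict P ω) else 0) *
            wordWeight x z j (Subtype.restrict (¬ P ·) ω) := by
        rw [sum_filter]
        refine sum_congr rfl fun ω _ => ?_
        rw [ite_mul, zero_mul]
        congr 1
        exact (Fintype.prod_subtype_mul_prod_subtype P fun i => letterWeight x z j (ω i)).symm
    _ = ∑ ω : ({i // P i} → α) × ({i // ¬ P i} → α),
          (if ¬ IsStrictPlurality ω.1 j then wordWeight x z j ω.1 else 0) *
            wordWeight x z j ω.2 :=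
        (Equiv.piEquivPiSubtypeProd P fun _ => α).sum_comp fun ω =>
          (if ¬ IsStrictPlurality ω.1 j then wordWeight x z j ω.1 else 0) * wordWeight x z j ω.2
    _ = _ := by
        rw [mul_comm, nonStrictPluralityWeight, sum_filter, ← sum_wordWeight j, Fintype.sum_mul_sum,
          Fintype.sum_prod_type]

lemma sum_thinned_wordWeight_le {p : ℝ} (hp : 0 ≤ p) (hp1 : p ≤ 1) (hz : 0 ≤ z) (hzx : z ≤ x)
    (htotal : letterTotal α x z = 1) (j : α) :
    ∑ ω : ι → Bool × α with
        ¬ IsStrictPlurality (Subtype.restrict (fun i => (ω i).1 = true) fun i => (ω i).2) j,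
      ∏ i, (if (ω i).1 then p else 1 - p) * letterWeight x z j (ω i).2 ≤
        (1 - p * (x - z) ^ 2 / 3) ^ Fintype.card ι := by
  let a := 1 - (x - z) ^ 2 / 3
  calc _ = ∑ b : ι → Bool, (∏ i, if b i then p else 1 - p) *
        ∑ ω : ι → α with ¬ IsStrictPlurality (Subtype.restrict (fun i => b i = true) ω) j,
          wordWeight x z j ω := by
        simp only [mul_sum, sum_filter, mul_ite, mul_zero, ← Fintype.sum_prod_type',
          prod_mul_distrib]
        exact (Equiv.arrowProdEquivProdArrow ι (fun _ => Bool) fun _ => α).sum_comp fun ω =>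
          if ¬ IsStrictPlurality (Subtype.restrict (fun i => ω.1 i = true) ω.2) j then
            (∏ i, if ω.1 i then p else 1 - p) * wordWeight x z j ω.2 else 0
    _ ≤ ∑ b : ι → Bool, (∏ i, if b i then p else 1 - p) * a ^ Fintype.card {i // b i = true} := by
        refine sum_le_sum fun b _ => mul_le_mul_of_nonneg_left ?_ (prod_nonneg fun i _ => ?_)
        · rw [sum_wordWeight_restrict, htotal, one_pow, one_mul]
          exact nonStrictPluralityWeight_le_one_sub_pow hz hzx htotal j
        · split_ifs <;> linarith
    _ = ∑ b : ι → Bool, ∏ i, if b i then p * a else 1 - p := by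
        refine sum_congr rfl fun b _ => ?_
        rw [Fintype.card_subtype, ← prod_const, prod_filter, ← prod_mul_distrib]
        exact prod_congr rfl fun i _ => by split_ifs <;> simp
    _ = (∑ b : Bool, if b then p * a else 1 - p) ^ Fintype.card ι := by
        rw [← card_univ, ← prod_const]
        exact sum_prod_piFinset univ fun _ (b : Bool) => if b then p * a else 1 - p
    _ = (1 - p * (x - z) ^ 2 / 3) ^ Fintype.card ι := by
        congr 1
        simp only [Fintype.sum_bool, if_true, a]
        norm_num
        ring

end Weights

lemma one_sub_pow_le_measure_pi_isStrictPlurality [Fintype α] [MeasurableSpace α]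
    [MeasurableSingletonClass α] {p x z : ℝ} (hp : 0 ≤ p) (hp1 : p ≤ 1) (hz : 0 ≤ z) (hzx : z ≤ x)
    (htotal : letterTotal α x z = 1) {j : α} {ν : Measure (Bool × α)} [IsProbabilityMeasure ν]
    (hν : ∀ b c, ν {(b, c)} = ENNReal.ofReal ((if b then p else 1 - p) * letterWeight x z j c)) :
    ENNReal.ofReal (1 - (1 - p * (x - z) ^ 2 / 3) ^ Fintype.card ι) ≤
      (Measure.pi fun _ : ι => ν) {ω | IsStrictPlurality
        (Subtype.restrict (fun i => (ω i).1 = true) fun i => (ω i).2) j} := by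
  classical
  set E : Set (ι → Bool × α) := {ω | IsStrictPlurality
    (Subtype.restrict (fun i => (ω i).1 = true) fun i => (ω i).2) j}
  have hweight (a : Bool × α) : 0 ≤ (if a.1 then p else 1 - p) * letterWeight x z j a.2 :=
    mul_nonneg (by split_ifs <;> linarith) (letterWeight_nonneg (hz.trans hzx) hz j a.2)
  have hsum := sum_thinned_wordWeight_le (ι := ι) hp hp1 hz hzx htotal j
  have hcompl : (Measure.pi fun _ : ι => ν) Eᶜ ≤
      ENNReal.ofReal ((1 - p * (x - z) ^ 2 / 3) ^ Fintype.card ι) :=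
    (measure_pi_setOf_eq_ofReal_sum hweight (fun a => hν a.1 a.2) _).trans_le
      (ENNReal.ofReal_le_ofReal hsum)
  have hnonneg := (sum_nonneg fun ω _ => prod_nonneg fun i _ => hweight (ω i)).trans hsum
  rw [ENNReal.ofReal_sub 1 hnonneg, ENNReal.ofReal_one, tsub_le_iff_right,
    ← prob_add_prob_compl (μ := Measure.pi fun _ : ι => ν) E.toFinite.measurableSet]
  gcongr

lemma mul_sq_sub_inv_div_le {d : ℝ} (hd : 1 < d) (q : ℝ) :
    (d - 1) * (q - 1 / d) ^ 2 / d ≤ (q - (1 - q) / (d - 1)) ^ 2 := by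
  have hd' : 0 < d - 1 := sub_pos.2 hd
  have hratio : (d - 1) / d ≤ 1 := (div_le_one (by linarith)).2 (by linarith)
  calc (d - 1) * (q - 1 / d) ^ 2 / d
      = ((d - 1) / d) ^ 3 * (q - (1 - q) / (d - 1)) ^ 2 := by
        field_simp
        ring
    _ ≤ (q - (1 - q) / (d - 1)) ^ 2 :=
        mul_le_of_le_one_left (sq_nonneg _) (pow_le_one₀ (by positivity) hratio)

lemma one_sub_mul_sq_pow_le_exp {d p q : ℝ} (hd : 1 < d) (hp : 0 ≤ p) (hp1 : p ≤ 1)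
    (hgap : (q - (1 - q) / (d - 1)) ^ 2 ≤ 1) (n : ℕ) :
    (1 - p * (q - (1 - q) / (d - 1)) ^ 2 / 3) ^ n ≤
      Real.exp (-(n * p * (d - 1) * (q - 1 / d) ^ 2) / (3 * d)) := by
  have hle := mul_le_one₀ hp1 (sq_nonneg _) hgap
  calc (1 - p * (q - (1 - q) / (d - 1)) ^ 2 / 3) ^ n
      ≤ Real.exp (-(p * (q - (1 - q) / (d - 1)) ^ 2 / 3)) ^ n :=
        pow_le_pow_left₀ (by linarith) (Real.one_sub_le_exp_neg _) n
    _ = Real.exp (-(n * (p * (q - (1 - q) / (d - 1)) ^ 2 / 3))) := by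
        rw [← Real.exp_nat_mul, mul_neg]
    _ ≤ Real.exp (-(n * (p * ((d - 1) * (q - 1 / d) ^ 2 / d) / 3))) := by
        gcongr
        exact mul_sq_sub_inv_div_le hd q
    _ = _ := by
        congr 1
        field_simp

end

theorem direction_plurality_bound_general {ι α : Type*} [Fintype ι] [Fintype α] [Nontrivial α]
    [DecidableEq α] [MeasurableSpace α] [MeasurableSingletonClass α] {p q : ℝ}
    (hp : 0 ≤ p) (hp1 : p ≤ 1) (hq : 1 / (Fintype.card α : ℝ) ≤ q) (hq1 : q ≤ 1) (parent : α)
    (ν : Measure (Bool × α)) [IsProbabilityMeasure ν]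
    (hν : ∀ (b : Bool) (c : α), ν {(b, c)} = ENNReal.ofReal
      ((if b then p else 1 - p) *
        (if c = parent then q else (1 - q) / ((Fintype.card α : ℝ) - 1)))) :
    (Measure.pi fun _ : ι => ν)
        {ω | ∀ c, c ≠ parent →
          (Finset.univ.filter fun i => (ω i).1 = true ∧ (ω i).2 = c).card <
          (Finset.univ.filter fun i => (ω i).1 = true ∧ (ω i).2 = parent).card} ≥
      ENNReal.ofReal (1 - Real.exp (-((Fintype.card ι : ℝ) * p * ((Fintype.card α : ℝ) - 1) *
        (q - 1 / (Fintype.card α : ℝ)) ^ 2) / (3 * Fintype.card α))) := by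
  classical
  set d : ℝ := (Fintype.card α : ℝ)
  have hd : 1 < d := Nat.one_lt_cast.2 Fintype.one_lt_card
  set z : ℝ := (1 - q) / (d - 1)
  have hz : 0 ≤ z := div_nonneg (by linarith) (by linarith)
  have hzq : z ≤ q := by
    rw [div_le_iff₀ (by linarith)] at hq ⊢
    linarith
  have htotal : letterTotal α q z = 1 := by
    rw [letterTotal, mul_div_cancel₀ _ (sub_ne_zero.2 hd.ne')]
    ring
  have hevent (ω : ι → Bool × α) :
      IsStrictPlurality (Subtype.restrict (fun i => (ω i).1 = true) fun i => (ω i).2) parent ↔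
        ∀ c, c ≠ parent → (Finset.univ.filter fun i => (ω i).1 = true ∧ (ω i).2 = c).card <
          (Finset.univ.filter fun i => (ω i).1 = true ∧ (ω i).2 = parent).card := by
    simp only [IsStrictPlurality, letterCount_restrict]
  have hgap : (q - z) ^ 2 ≤ 1 := pow_le_one₀ (by linarith) (by linarith)
  simp only [← hevent]
  refine le_trans (ENNReal.ofReal_le_ofReal (sub_le_sub_left ?_ 1))
    (one_sub_pow_le_measure_pi_isStrictPlurality hp hp1 hz hzq htotal hν)
  exact one_sub_mul_sq_pow_le_exp hd hp hp1 hgap _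

/-- Plurality bound for direction answers (core of Lemma 5): with `r` i.i.d. rounds, each
producing a Bernoulli(p) indicator `B` and an independent direction `D ∈ {0,…,d-1}` with
`P(D = 0) = q` and `P(D = j) = (1-q)/(d-1)` for `j ≠ 0`, the true parent (category 0)
receives a strict plurality of designations among rounds with `B = 1` with probability at
least `1 - exp(-r·p·(d-1)·(q - 1/d)²/(3d))`. -/
theorem direction_plurality_bound (d r : ℕ) [NeZero d] (hd : 3 ≤ d) (hr : 1 ≤ r)
    (p q : ℝ) (hp : 1 / 2 < p) (hp1 : p ≤ 1) (hq : 1 / (d : ℝ) < q) (hq1 : q ≤ 1)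
    (ν : Measure (Bool × Fin d)) [IsProbabilityMeasure ν]
    (hν : ∀ (b : Bool) (j : Fin d),
      ν {(b, j)} = ENNReal.ofReal
        ((if b then p else 1 - p) * (if j = 0 then q else (1 - q) / ((d : ℝ) - 1)))) :
    (Measure.pi fun _ : Fin r => ν)
        {ω | ∀ c : Fin d, c ≠ 0 →
          (Finset.univ.filter fun i : Fin r => (ω i).1 = true ∧ (ω i).2 = c).card <
          (Finset.univ.filter fun i : Fin r => (ω i).1 = true ∧ (ω i).2 = 0).card} ≥
      ENNReal.ofReal
        (1 - Real.exp (-((r : ℝ) * p * ((d : ℝ) - 1) * (q - 1 / (d : ℝ)) ^ 2) / (3 * d))) := by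
  have := Fin.nontrivial_iff_two_le.2 (Nat.le_of_succ_le hd)
  simpa using direction_plurality_bound_general (ι := Fin r) (by linarith) hp1
    (by simpa using hq.le) hq1 0 ν (by simpa using hν)
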